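/- Let L ≥ 2. The Kennedy–Tasaki operator U_KT = ∏_{1≤u<v≤L} exp(iπ Sᶻ_u Sˣ_v) on (ℂ³)^{⊗L} is Hermitian and involutive: U_KT† = U_KT and U_KT² = 1 (hence U_KT is unitary). -/

import Mathlib

noncomputable section
open Complex Matrix

/-- The Hilbert space operators of the `L`-site spin-1 chain: matrices on `(ℂ³)^{⊗L}`,
with the tensor factors indexed by sites and the single-site ordered basis `(|+⟩,|0⟩,|−⟩)`. -/
abbrev Op (L : ℕ) : Type := Matrix (Fin L → Fin 3) (Fin L → Fin 3) ℂ

/-- The spin-1 matrix `Sˣ`. -/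
def Sx : Matrix (Fin 3) (Fin 3) ℂ :=
  ((Real.sqrt 2 : ℝ) : ℂ)⁻¹ • !![0, 1, 0; 1, 0, 1; 0, 1, 0]

/-- The spin-1 matrix `Sʸ`. -/
def Sy : Matrix (Fin 3) (Fin 3) ℂ :=
  ((Real.sqrt 2 : ℝ) : ℂ)⁻¹ • !![0, -I, 0; I, 0, -I; 0, I, 0]

/-- The spin-1 matrix `Sᶻ = diag(1,0,−1)`. -/
def Sz : Matrix (Fin 3) (Fin 3) ℂ := !![1, 0, 0; 0, 0, 0; 0, 0, -1]

/-- `site A j` is the one-site operator `A` acting on site `j` and identity elsewhere. -/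
def site {L : ℕ} (A : Matrix (Fin 3) (Fin 3) ℂ) (j : Fin L) : Op L :=
  Matrix.of fun f g => ∏ k : Fin L, if k = j then A (f k) (g k) else (if f k = g k then 1 else 0)

/-- One factor `exp(iπ Sᶻ_u Sˣ_v)` of the Kennedy–Tasaki transformation. -/
def ktFactor {L : ℕ} (u v : Fin L) : Op L :=
  NormedSpace.exp (((Real.pi : ℂ) * I) • (site Sz u * site Sx v))

/-- The Kennedy–Tasaki transformation `U_KT = ∏_{1 ≤ u < v ≤ L} exp(iπ Sᶻ_u Sˣ_v)`
(the factors pairwise commute, so the ordering is immaterial). -/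
def UKT (L : ℕ) : Op L :=
  ((List.finRange L).map fun u =>
    ((List.finRange L).map fun v => if u < v then ktFactor u v else 1).prod).prod

/-- The p-wave basis vector `|↑⟩ = (|+⟩ − |−⟩)/√2`. -/
def up : Fin 3 → ℂ := ![((Real.sqrt 2 : ℝ) : ℂ)⁻¹, 0, -((Real.sqrt 2 : ℝ) : ℂ)⁻¹]

/-- The p-wave basis vector `|↓⟩ = |0⟩`. -/
def down : Fin 3 → ℂ := ![0, 1, 0]

/-- The p-wave basis vector `|h⟩ = (|+⟩ + |−⟩)/√2`. -/
def hole : Fin 3 → ℂ := ![((Real.sqrt 2 : ℝ) : ℂ)⁻¹, 0, ((Real.sqrt 2 : ℝ) : ℂ)⁻¹]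

/-- The rank-one operator `|a⟩⟨b|`. -/
def ketbra (a b : Fin 3 → ℂ) : Matrix (Fin 3) (Fin 3) ℂ := Matrix.vecMulVec a (star b)

/-- `σˣ = |↑⟩⟨↓| + |↓⟩⟨↑|` (annihilating `|h⟩`). -/
def sigx : Matrix (Fin 3) (Fin 3) ℂ := ketbra up down + ketbra down up

/-- `σʸ = −i|↑⟩⟨↓| + i|↓⟩⟨↑|` (annihilating `|h⟩`). -/
def sigy : Matrix (Fin 3) (Fin 3) ℂ := (-I) • ketbra up down + I • ketbra down up

/-- `σᶻ = |↑⟩⟨↑| − |↓⟩⟨↓|` (annihilating `|h⟩`). -/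
def sigz : Matrix (Fin 3) (Fin 3) ℂ := ketbra up up - ketbra down down

/-- `n = |↑⟩⟨↑| + |↓⟩⟨↓|` (annihilating `|h⟩`). -/
def nMat : Matrix (Fin 3) (Fin 3) ℂ := ketbra up up + ketbra down down

/-- `h = |h⟩⟨h|`. -/
def hMat : Matrix (Fin 3) (Fin 3) ℂ := ketbra hole hole

/-- `P = ⊗_{j=1}^L n_j`, the orthogonal projection onto the hole-free subspace. -/
def Pproj (L : ℕ) : Op L := Matrix.of fun f g => ∏ k : Fin L, nMat (f k) (g k)

/-- The Heisenberg coupling `S_j · S_k`. -/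
def heis {L : ℕ} (j k : Fin L) : Op L :=
  site Sx j * site Sx k + site Sy j * site Sy k + site Sz j * site Sz k

/-- The bilinear-biquadratic Hamiltonian
`H_BLBQ(θ) = Σ_{j=1}^{L−1} [cosθ (S_j·S_{j+1}) + sinθ (S_j·S_{j+1})²]`. -/
def HBLBQ (L : ℕ) (θ : ℝ) : Op L :=
  ∑ j : Fin L, if h : (j : ℕ) + 1 < L then
    ((Real.cos θ : ℝ) : ℂ) • heis j ⟨(j : ℕ) + 1, h⟩
      + ((Real.sin θ : ℝ) : ℂ) • (heis j ⟨(j : ℕ) + 1, h⟩) ^ 2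
  else 0

/-- The self-dual Hamiltonian `H_SD(θ) = H_BLBQ(θ) + U_KT H_BLBQ(θ) U_KT`. -/
def HSD (L : ℕ) (θ : ℝ) : Op L := HBLBQ L θ + UKT L * HBLBQ L θ * UKT L

/-- The spin-1/2 XXZ Hamiltonian written in the p-wave basis:
`H_XXZ(θ) = (cosθ−sinθ) Σ_j (−σˣ_jσˣ_{j+1} + σʸ_jσʸ_{j+1}) + sinθ Σ_j σᶻ_jσᶻ_{j+1}`. -/
def HXXZ (L : ℕ) (θ : ℝ) : Op L :=
  ((Real.cos θ - Real.sin θ : ℝ) : ℂ) •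
    (∑ j : Fin L, if h : (j : ℕ) + 1 < L then
      -(site sigx j * site sigx ⟨(j : ℕ) + 1, h⟩) + site sigy j * site sigy ⟨(j : ℕ) + 1, h⟩
    else 0)
  + ((Real.sin θ : ℝ) : ℂ) •
    (∑ j : Fin L, if h : (j : ℕ) + 1 < L then
      site sigz j * site sigz ⟨(j : ℕ) + 1, h⟩
    else 0)

/-- The global product `∏_{j=1}^L exp(c • A_j)` of commuting single-site exponentials. -/
def globalProd (L : ℕ) (A : Matrix (Fin 3) (Fin 3) ℂ) (c : ℂ) : Op L :=
  ((List.finRange L).map fun j => NormedSpace.exp (c • site A j)).prod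

/-- The symmetry flux `F^y_j = exp(−iπ Σ_{k<j} Sʸ_k) · Sʸ_j`. -/
def fluxY (L : ℕ) (j : Fin L) : Op L :=
  NormedSpace.exp ((-((Real.pi : ℂ) * I)) •
    ∑ k : Fin L, if (k : ℕ) < (j : ℕ) then site Sy k else 0) * site Sy j

/-!
Both spin matrices satisfy `S³ = S`, and hence so does `X = Sᶻ_u Sˣ_v` for `u ≠ v`. For such a
Hermitian `X`, the square `X²` is the projection onto the eigenspaces for `±1` and
`exp(iπX) = 1 - 2X²` is the corresponding reflection, Hermitian and unitary. Although
`Sᶻ` and `Sˣ` do not commute, their squares do, so all the reflections commute; a product of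
commuting Hermitian unitaries is a Hermitian unitary, that is, a Hermitian involution.
-/

section PowThreeEqSelf

theorem isStarProjection_sq_of_pow_three_eq_self {R : Type*} [Monoid R] [StarMul R] {x : R}
    (hx : IsSelfAdjoint x) (hx3 : x ^ 3 = x) : IsStarProjection (x ^ 2) where
  isIdempotentElem := by
    rw [IsIdempotentElem, ← pow_add, pow_succ x 3, hx3, sq]
  isSelfAdjoint := hx.pow 2

theorem one_sub_two_mul_mem_unitary {R : Type*} [Ring R] [StarRing R] {p : R}
    (hp : IsStarProjection p) : 1 - 2 * p ∈ unitary R := by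
  have reflection_eq : 1 - 2 * p = 2 * (1 - p) - 1 := by noncomm_ring
  exact reflection_eq ▸ hp.one_sub.two_mul_sub_one_mem_unitary

variable {A : Type*} [Ring A] [Algebra ℂ A] {x : A}

-- The summands are the spectral projections of `x` for the eigenvalues `1`, `-1` and `0`, each
-- weighted by the `n`-th power of its eigenvalue.
theorem pow_eq_spectral_sum_of_pow_three_eq_self (hx3 : x ^ 3 = x) (n : ℕ) :
    x ^ n = (2⁻¹ : ℂ) • (x ^ 2 + x) + (-1 : ℂ) ^ n • (2⁻¹ : ℂ) • (x ^ 2 - x)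
      + if n = 0 then 1 - x ^ 2 else 0 := by
  induction n with
  | zero => simp only [pow_zero, if_true]; module
  | succ n ih =>
    rcases n with _ | n
    · simp only [zero_add, pow_one, one_ne_zero, if_false]; module
    · rw [pow_succ, ih]
      simp only [Nat.succ_ne_zero, if_false, add_zero, add_mul, sub_mul, smul_mul_assoc,
        ← pow_succ, ← sq, hx3]
      module

variable [TopologicalSpace A] [IsTopologicalRing A] [ContinuousSMul ℂ A] [T2Space A]

theorem exp_smul_of_pow_three_eq_self (hx3 : x ^ 3 = x) (z : ℂ) :
    NormedSpace.exp (z • x) = 1 + sinh z • x + (cosh z - 1) • x ^ 2 := by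
  have hasSum_exp (w : ℂ) (a : A) :
      HasSum (fun n : ℕ => ((n.factorial : ℂ)⁻¹ * w ^ n) • a) (Complex.exp w • a) := by
    simpa only [Complex.exp_eq_exp_ℂ, smul_eq_mul] using
      (NormedSpace.exp_series_hasSum_exp' (𝕂 := ℂ) w).smul_const a
  have hasSum_series := ((hasSum_exp z ((2⁻¹ : ℂ) • (x ^ 2 + x))).add
    (hasSum_exp (-z) ((2⁻¹ : ℂ) • (x ^ 2 - x)))).add (hasSum_ite_eq 0 (1 - x ^ 2))
  have series_eq (n : ℕ) : (n.factorial : ℂ)⁻¹ • (z • x) ^ n =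
      ((n.factorial : ℂ)⁻¹ * z ^ n) • (2⁻¹ : ℂ) • (x ^ 2 + x)
        + ((n.factorial : ℂ)⁻¹ * (-z) ^ n) • (2⁻¹ : ℂ) • (x ^ 2 - x)
        + if n = 0 then 1 - x ^ 2 else 0 := by
    rw [smul_pow, pow_eq_spectral_sum_of_pow_three_eq_self hx3 n, neg_pow z]
    split_ifs with hn
    · subst hn
      simp only [Nat.factorial_zero, Nat.cast_one, inv_one, pow_zero, mul_one, one_smul]
    · module
  simp only [NormedSpace.exp_eq_tsum ℂ, series_eq, hasSum_series.tsum_eq, sinh, cosh]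
  module

theorem exp_pi_mul_I_smul_of_pow_three_eq_self (hx3 : x ^ 3 = x) :
    NormedSpace.exp (((Real.pi : ℂ) * I) • x) = 1 - 2 * x ^ 2 := by
  rw [exp_smul_of_pow_three_eq_self hx3, sinh_mul_I, cosh_mul_I, sin_pi, cos_pi, two_mul]
  module

end PowThreeEqSelf

theorem isSelfAdjoint_list_prod {R : Type*} [Monoid R] [StarMul R] {l : List R}
    (hl : ∀ a ∈ l, IsSelfAdjoint a) (hcomm : l.Pairwise Commute) : IsSelfAdjoint l.prod := by
  induction l with
  | nil => exact .one R
  | cons a l ih =>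
    rw [List.forall_mem_cons] at hl
    rw [List.pairwise_cons] at hcomm
    rw [List.prod_cons]
    exact (hl.1.commute_iff (ih hl.2 hcomm.2)).1 (Commute.list_prod_right _ _ hcomm.1)

section PiKronecker

variable {ι R : Type*} {n : ι → Type*} [Fintype ι] [DecidableEq ι] [∀ i, Fintype (n i)]
  [∀ i, DecidableEq (n i)] [CommSemiring R]

/-- The Kronecker (tensor) product `⨂ i, M i` of a finite family of square matrices, as a monoid
homomorphism. Its rows and columns are indexed by choices of one index in each factor. -/
def piKronecker : (∀ i, Matrix (n i) (n i) R) →* Matrix (∀ i, n i) (∀ i, n i) R where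
  toFun M := .of fun f g => ∏ i, M i (f i) (g i)
  map_one' := by
    ext f g
    simp [Matrix.one_apply, Finset.prod_ite_zero, funext_iff]
  map_mul' M N := by
    ext f g
    simp only [Matrix.mul_apply, Matrix.of_apply, Pi.mul_apply, ← Finset.prod_mul_distrib]
    rw [Finset.prod_univ_sum, Fintype.piFinset_univ]

theorem piKronecker_apply (M : ∀ i, Matrix (n i) (n i) R) (f g : ∀ i, n i) :
    piKronecker M f g = ∏ i, M i (f i) (g i) :=
  rfl

theorem star_piKronecker [StarRing R] (M : ∀ i, Matrix (n i) (n i) R) :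
    star (piKronecker M) = piKronecker (star M) := by
  ext f g
  simp only [Matrix.star_apply, piKronecker_apply, Pi.star_apply, star_prod]

end PiKronecker

section Site

variable {L : ℕ} {A B : Matrix (Fin 3) (Fin 3) ℂ} {i j : Fin L}

theorem site_eq_piKronecker_mulSingle (A : Matrix (Fin 3) (Fin 3) ℂ) (j : Fin L) :
    site A j = piKronecker (Pi.mulSingle j A) := by
  ext f g
  rw [site, Matrix.of_apply, piKronecker_apply]
  refine Finset.prod_congr rfl fun k _ => ?_
  obtain rfl | hkj := eq_or_ne k j
  · rw [if_pos rfl, Pi.mulSingle_eq_same]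
  · rw [if_neg hkj, Pi.mulSingle_eq_of_ne hkj, Matrix.one_apply]

theorem site_pow (A : Matrix (Fin 3) (Fin 3) ℂ) (j : Fin L) (m : ℕ) :
    site A j ^ m = site (A ^ m) j := by
  simp only [site_eq_piKronecker_mulSingle, ← map_pow, ← Pi.mulSingle_pow]

theorem isSelfAdjoint_site (hA : IsSelfAdjoint A) (j : Fin L) : IsSelfAdjoint (site A j) := by
  rw [isSelfAdjoint_iff, site_eq_piKronecker_mulSingle, star_piKronecker, Pi.star_mulSingle,
    hA.star_eq]

theorem commute_site_of_ne (A B : Matrix (Fin 3) (Fin 3) ℂ) (hij : i ≠ j) :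
    Commute (site A i) (site B j) := by
  simp only [site_eq_piKronecker_mulSingle]
  exact (Pi.mulSingle_commute (f := fun _ => Matrix (Fin 3) (Fin 3) ℂ) hij A B).map piKronecker

theorem commute_site_of_commute (hAB : Commute A B) (i j : Fin L) :
    Commute (site A i) (site B j) := by
  obtain rfl | hij := eq_or_ne i j
  · simp only [site_eq_piKronecker_mulSingle]
    exact (hAB.map (MonoidHom.mulSingle (fun _ => Matrix (Fin 3) (Fin 3) ℂ) i)).map piKronecker
  · exact commute_site_of_ne A B hij

theorem site_mul_site_pow (A B : Matrix (Fin 3) (Fin 3) ℂ) (hij : i ≠ j) (m : ℕ) :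
    (site A i * site B j) ^ m = site (A ^ m) i * site (B ^ m) j := by
  rw [(commute_site_of_ne A B hij).mul_pow, site_pow, site_pow]

end Site

section SpinOne

theorem isSelfAdjoint_Sx : IsSelfAdjoint Sx := by
  ext i j
  fin_cases i <;> fin_cases j <;> simp [Sx]

theorem isSelfAdjoint_Sz : IsSelfAdjoint Sz := by
  ext i j
  fin_cases i <;> fin_cases j <;> simp [Sz]

theorem Sx_sq : Sx ^ 2 = !![1/2, 0, 1/2; 0, 1, 0; 1/2, 0, 1/2] := by
  have inv_sqrt_two_sq : (((Real.sqrt 2 : ℝ) : ℂ)⁻¹) ^ 2 = 1 / 2 := by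
    rw [inv_pow, ← ofReal_pow, Real.sq_sqrt zero_le_two, ofReal_ofNat, one_div]
  rw [Sx, smul_pow, inv_sqrt_two_sq, sq]
  ext i j
  fin_cases i <;> fin_cases j <;> norm_num

theorem Sz_sq : Sz ^ 2 = !![1, 0, 0; 0, 0, 0; 0, 0, 1] := by
  ext i j
  fin_cases i <;> fin_cases j <;> simp [Sz, sq]

theorem Sx_pow_three : Sx ^ 3 = Sx := by
  rw [pow_succ, Sx_sq, Sx]
  ext i j
  fin_cases i <;> fin_cases j <;> simp <;> ring

theorem Sz_pow_three : Sz ^ 3 = Sz := by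
  rw [pow_succ, Sz_sq, Sz]
  ext i j
  fin_cases i <;> fin_cases j <;> simp

theorem commute_Sz_sq_Sx_sq : Commute (Sz ^ 2) (Sx ^ 2) := by
  rw [Commute, SemiconjBy, Sz_sq, Sx_sq]
  ext i j
  fin_cases i <;> fin_cases j <;> simp

end SpinOne

section KTFactor

variable {L : ℕ} {u v u' v' : Fin L}

theorem site_Sz_mul_site_Sx_pow_three (huv : u ≠ v) :
    (site Sz u * site Sx v) ^ 3 = site Sz u * site Sx v := by
  rw [site_mul_site_pow Sz Sx huv, Sz_pow_three, Sx_pow_three]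

theorem isStarProjection_site_Sz_mul_site_Sx_sq (huv : u ≠ v) :
    IsStarProjection ((site Sz u * site Sx v) ^ 2) := by
  refine isStarProjection_sq_of_pow_three_eq_self ?_ (site_Sz_mul_site_Sx_pow_three huv)
  exact ((isSelfAdjoint_site isSelfAdjoint_Sz u).commute_iff
    (isSelfAdjoint_site isSelfAdjoint_Sx v)).1 (commute_site_of_ne Sz Sx huv)

theorem ktFactor_eq_one_sub_two_mul_sq (huv : u ≠ v) :
    ktFactor u v = 1 - 2 * (site Sz u * site Sx v) ^ 2 :=
  exp_pi_mul_I_smul_of_pow_three_eq_self (site_Sz_mul_site_Sx_pow_three huv)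

theorem ktFactor_mem_unitary (huv : u ≠ v) : ktFactor u v ∈ unitary (Op L) := by
  rw [ktFactor_eq_one_sub_two_mul_sq huv]
  exact one_sub_two_mul_mem_unitary (isStarProjection_site_Sz_mul_site_Sx_sq huv)

theorem isSelfAdjoint_ktFactor (huv : u ≠ v) : IsSelfAdjoint (ktFactor u v) := by
  rw [ktFactor_eq_one_sub_two_mul_sq huv, two_mul]
  have hp := (isStarProjection_site_Sz_mul_site_Sx_sq huv).isSelfAdjoint
  exact (IsSelfAdjoint.one _).sub (hp.add hp)

theorem commute_ktFactor (huv : u ≠ v) (huv' : u' ≠ v') :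
    Commute (ktFactor u v) (ktFactor u' v') := by
  have commute_squares :
      Commute ((site Sz u * site Sx v) ^ 2) ((site Sz u' * site Sx v') ^ 2) := by
    rw [site_mul_site_pow Sz Sx huv, site_mul_site_pow Sz Sx huv']
    exact .mul_left
      (.mul_right (commute_site_of_commute (.refl _) u u')
        (commute_site_of_commute commute_Sz_sq_Sx_sq u v'))
      (.mul_right (commute_site_of_commute commute_Sz_sq_Sx_sq.symm v u')
        (commute_site_of_commute (.refl _) v v'))
  rw [ktFactor_eq_one_sub_two_mul_sq huv, ktFactor_eq_one_sub_two_mul_sq huv']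
  simp only [two_mul]
  exact .sub_left (.one_left _) (.sub_right (.one_right _)
    (.add_left (.add_right commute_squares commute_squares)
      (.add_right commute_squares commute_squares)))

theorem commute_ite_ktFactor (u v u' v' : Fin L) :
    Commute (if u < v then ktFactor u v else 1) (if u' < v' then ktFactor u' v' else 1) := by
  split_ifs with huv huv'
  · exact commute_ktFactor huv.ne huv'.ne
  · exact .one_right _
  · exact .one_left _
  · exact .one_left _

end KTFactor

theorem UKT_mem_unitary (L : ℕ) : UKT L ∈ unitary (Op L) := by
  refine list_prod_mem (List.forall_mem_map.2 fun u _ =>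
    list_prod_mem (List.forall_mem_map.2 fun v _ => ?_))
  split_ifs with huv
  exacts [ktFactor_mem_unitary huv.ne, one_mem _]

theorem isSelfAdjoint_UKT (L : ℕ) : IsSelfAdjoint (UKT L) := by
  refine isSelfAdjoint_list_prod (List.forall_mem_map.2 fun u _ => isSelfAdjoint_list_prod
    (List.forall_mem_map.2 fun v _ => ?_) ?_) ?_
  · split_ifs with huv
    exacts [isSelfAdjoint_ktFactor huv.ne, .one _]
  · exact List.pairwise_map.2 (List.pairwise_of_forall fun v v' => commute_ite_ktFactor u v u v')
  · refine List.pairwise_map.2 (List.pairwise_of_forall fun u u' => ?_)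
    exact Commute.list_prod_left _ _ (List.forall_mem_map.2 fun v _ =>
      Commute.list_prod_right _ _ (List.forall_mem_map.2 fun v' _ =>
        commute_ite_ktFactor u v u' v'))

/-- The Kennedy–Tasaki operator `U_KT = ∏_{1≤u<v≤L} exp(iπ Sᶻ_u Sˣ_v)` on
`(ℂ³)^{⊗L}` is Hermitian and involutive (hence unitary). -/
theorem UKT_hermitian_involutive (L : ℕ) (hL : 2 ≤ L) :
    (UKT L)ᴴ = UKT L ∧ UKT L * UKT L = 1 := by
  have unitary_mul : star (UKT L) * UKT L = 1 := Unitary.star_mul_self_of_mem (UKT_mem_unitary L)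
  rw [(isSelfAdjoint_UKT L).star_eq] at unitary_mul
  exact ⟨isSelfAdjoint_UKT L, unitary_mul⟩

end
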